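/- arXiv:0910.3417 — 3 statements merged into one kernel-verified Lean document; each statement's English description precedes it below -/
import Mathlib

section
/- Let q be a prime power with q ≡ 2 (mod 3), let n be a positive integer, and let k be an odd divisor of n. Set T_k = Σ_{i=0}^{n/k−1} t^{q^{ki}} ∈ 𝔽_q[t], F_k = T_k^{(q^k−2)/3} and G_k = T_k^{q^k−1} (note q^k ≡ 2 (mod 3), so (q^k−2)/3 is an integer). Then G_k² − G_k = (t^{q^n}−t)·F_k³ in 𝔽_q[t], the formal derivative G_k′ is nonzero, and deg G_k = q^n − q^{n−k}, so that for distinct odd divisors k ≠ k′ of n the separable ∞-integral points (F_k, G_k) and (F_{k′}, G_{k′}) of the cubic twist y² − y = (t^{q^n}−t)x³ are distinct. -/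
open Polynomial

/-- The trace polynomial `T_k = Σ_{i=0}^{n/k-1} t^(q^(k*i))` over `𝔽_q`. -/
noncomputable def tracePoly (Fq : Type*) [Field Fq] [Fintype Fq] (n k : ℕ) : Polynomial Fq :=
  ∑ i ∈ Finset.range (n / k), X ^ (Fintype.card Fq) ^ (k * i)

/-- `F_k = T_k ^ ((q^k - 2)/3)`. -/
noncomputable def Fcub (Fq : Type*) [Field Fq] [Fintype Fq] (n k : ℕ) : Polynomial Fq :=
  tracePoly Fq n k ^ ((Fintype.card Fq ^ k - 2) / 3)

/-- `G_k = T_k ^ (q^k - 1)`. -/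
noncomputable def Gcub (Fq : Type*) [Field Fq] [Fintype Fq] (n k : ℕ) : Polynomial Fq :=
  tracePoly Fq n k ^ (Fintype.card Fq ^ k - 1)

/-!
Put `Q = q ^ k`. Raising to the power `Q` is additive and shifts the summands of
`T = ∑ X ^ Q ^ i`, so `T ^ Q - T` telescopes to `X ^ q ^ n - X`. For `Q ≡ 2 (mod 3)` the identity
`G ^ 2 - G = (T ^ Q - T) * F ^ 3` is a comparison of exponents of `T`. Differentiating
`T ^ Q - T = X ^ q ^ n - X` in characteristic `p ∣ q` gives `T' = 1`, hence `G' = -T ^ (Q - 2)`, and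
the degree of `G` determines `k`.
-/

theorem pow_mod_three_eq_two_of_odd {q k : ℕ} (hq : q % 3 = 2) (hk : Odd k) : q ^ k % 3 = 2 := by
  have hdvd : q + 1 ∣ q ^ k + 1 := by simpa using hk.nat_add_dvd_pow_add_pow q 1
  have : 3 ∣ q ^ k + 1 := .trans (by lia) hdvd
  lia

theorem injOn_pow_sub_pow_sub {q : ℕ} (hq : 1 < q) (n : ℕ) :
    Set.InjOn (fun k => q ^ n - q ^ (n - k)) (Set.Iic n) := by
  intro k hk l hl h
  have hle (j : ℕ) : q ^ (n - j) ≤ q ^ n := Nat.pow_le_pow_right (by lia) (Nat.sub_le n j)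
  have hpow : q ^ (n - k) = q ^ (n - l) := (tsub_right_inj (hle k) (hle l)).mp h
  exact (tsub_right_inj hk hl).mp (Nat.pow_right_injective hq hpow)

theorem sum_range_pow_pow_pow_sub_self {R : Type*} [CommRing R] (p : ℕ) [ExpChar R p]
    (e m : ℕ) (x : R) :
    (∑ i ∈ Finset.range m, x ^ (p ^ e) ^ i) ^ p ^ e - ∑ i ∈ Finset.range m, x ^ (p ^ e) ^ i
      = x ^ (p ^ e) ^ m - x := by
  rw [sum_pow_char_pow, ← Finset.sum_sub_distrib]
  simp only [← pow_mul x, ← pow_succ]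
  simpa only [pow_zero, pow_one] using Finset.sum_range_sub (fun i => x ^ (p ^ e) ^ i) m

theorem pow_sub_one_sq_sub_pow_sub_one {R : Type*} [CommRing R] (x : R) {Q : ℕ}
    (hQ : Q % 3 = 2) :
    (x ^ (Q - 1)) ^ 2 - x ^ (Q - 1) = (x ^ Q - x) * (x ^ ((Q - 2) / 3)) ^ 3 := by
  obtain ⟨r, rfl⟩ : ∃ r, Q = 3 * r + 2 := ⟨Q / 3, by lia⟩
  rw [show 3 * r + 2 - 1 = 3 * r + 1 by lia, show (3 * r + 2 - 2) / 3 = r by lia]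
  ring

theorem natDegree_sum_range_X_pow_pow {R : Type*} [Semiring R] [Nontrivial R] {Q : ℕ}
    (hQ : 1 < Q) (m : ℕ) :
    (∑ i ∈ Finset.range (m + 1), (X : R[X]) ^ Q ^ i).natDegree = Q ^ m := by
  induction m with
  | zero => simp
  | succ m ih =>
    rw [Finset.sum_range_succ, natDegree_add_eq_right_of_natDegree_lt, natDegree_X_pow]
    rw [ih, natDegree_X_pow]
    exact Nat.pow_lt_pow_right hQ m.lt_succ_self

theorem derivative_pow_sub_one_of_cast_eq_zero {R : Type*} [CommRing R] {Q : ℕ} (hQ : Q ≠ 0)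
    (hcast : (Q : R) = 0) {f : R[X]} (hf : derivative f = 1) :
    derivative (f ^ (Q - 1)) = -f ^ (Q - 2) := by
  have hpred : ((Q - 1 : ℕ) : R) = -1 := by
    rw [Nat.cast_pred (Nat.pos_of_ne_zero hQ), hcast, zero_sub]
  rw [derivative_pow, hf, hpred, Nat.sub_sub, C_neg, C_1, mul_one, neg_one_mul]

section FiniteField

variable {Fq : Type*} [Field Fq] [Fintype Fq] {n k : ℕ}

theorem tracePoly_eq_sum_X_pow_pow (n k : ℕ) :
    tracePoly Fq n k = ∑ i ∈ Finset.range (n / k), X ^ (Fintype.card Fq ^ k) ^ i := by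
  simp only [tracePoly, pow_mul]

theorem tracePoly_pow_card_pow_sub_self (hkn : k ∣ n) :
    tracePoly Fq n k ^ Fintype.card Fq ^ k - tracePoly Fq n k = X ^ Fintype.card Fq ^ n - X := by
  obtain ⟨p, _⟩ := CharP.exists Fq
  obtain ⟨e, hp, hcard⟩ := FiniteField.card Fq p
  have : Fact p.Prime := ⟨hp⟩
  have hQ : Fintype.card Fq ^ k = p ^ (e * k) := by rw [hcard, pow_mul]
  have hn : Fintype.card Fq ^ n = (p ^ (e * k)) ^ (n / k) := by
    rw [← hQ, ← pow_mul, Nat.mul_div_cancel' hkn]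
  rw [tracePoly_eq_sum_X_pow_pow, hn, hQ]
  exact sum_range_pow_pow_pow_sub_self p (e * k) (n / k) X

theorem derivative_tracePoly (hn : n ≠ 0) (hkn : k ∣ n) : derivative (tracePoly Fq n k) = 1 := by
  have hk : k ≠ 0 := ne_zero_of_dvd_ne_zero hn hkn
  have h := congrArg derivative (tracePoly_pow_card_pow_sub_self (Fq := Fq) hkn)
  simpa [derivative_pow, hn, hk] using h

theorem natDegree_tracePoly (hn : n ≠ 0) (hkn : k ∣ n) :
    (tracePoly Fq n k).natDegree = Fintype.card Fq ^ (n - k) := by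
  obtain ⟨m, rfl⟩ := hkn
  obtain ⟨hk, hm⟩ := mul_ne_zero_iff.mp hn
  obtain ⟨m, rfl⟩ := Nat.exists_eq_succ_of_ne_zero hm
  rw [tracePoly_eq_sum_X_pow_pow, Nat.mul_div_cancel_left _ (Nat.pos_of_ne_zero hk),
    natDegree_sum_range_X_pow_pow (Nat.one_lt_pow hk Fintype.one_lt_card), ← pow_mul,
    Nat.mul_succ, Nat.add_sub_cancel]

theorem Gcub_sq_sub_Gcub (hQ : Fintype.card Fq ^ k % 3 = 2) (hkn : k ∣ n) :
    Gcub Fq n k ^ 2 - Gcub Fq n k = (X ^ Fintype.card Fq ^ n - X) * Fcub Fq n k ^ 3 := by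
  rw [← tracePoly_pow_card_pow_sub_self hkn]
  exact pow_sub_one_sq_sub_pow_sub_one (tracePoly Fq n k) hQ

theorem derivative_Gcub (hn : n ≠ 0) (hkn : k ∣ n) :
    derivative (Gcub Fq n k) = -tracePoly Fq n k ^ (Fintype.card Fq ^ k - 2) := by
  have hk : k ≠ 0 := ne_zero_of_dvd_ne_zero hn hkn
  have hcast : ((Fintype.card Fq ^ k : ℕ) : Fq) = 0 := by simp [hk]
  exact derivative_pow_sub_one_of_cast_eq_zero (pow_ne_zero k Fintype.card_ne_zero) hcast
    (derivative_tracePoly hn hkn)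

theorem derivative_Gcub_ne_zero (hn : n ≠ 0) (hkn : k ∣ n) : derivative (Gcub Fq n k) ≠ 0 := by
  have hT : tracePoly Fq n k ≠ 0 := fun h => by
    simpa [h] using derivative_tracePoly (Fq := Fq) hn hkn
  rw [derivative_Gcub hn hkn]
  exact neg_ne_zero.mpr (pow_ne_zero _ hT)

theorem natDegree_Gcub (hn : n ≠ 0) (hkn : k ∣ n) :
    (Gcub Fq n k).natDegree = Fintype.card Fq ^ n - Fintype.card Fq ^ (n - k) := by
  have hkle : k ≤ n := Nat.le_of_dvd (Nat.pos_of_ne_zero hn) hkn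
  rw [Gcub, natDegree_pow, natDegree_tracePoly hn hkn, tsub_mul, one_mul, ← pow_add,
    Nat.add_sub_cancel' hkle]

theorem injOn_Gcub (hn : n ≠ 0) : Set.InjOn (Gcub Fq n) {k | k ∣ n} := by
  intro k hkn l hln h
  have hle {j : ℕ} (hj : j ∣ n) : j ≤ n := Nat.le_of_dvd (Nat.pos_of_ne_zero hn) hj
  refine injOn_pow_sub_pow_sub (Fintype.one_lt_card (α := Fq)) n (hle hkn) (hle hln) ?_
  simpa only [natDegree_Gcub hn hkn, natDegree_Gcub hn hln] using congrArg natDegree h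

end FiniteField

theorem stmt1 (Fq : Type*) [Field Fq] [Fintype Fq]
    (hq : Fintype.card Fq % 3 = 2) (n : ℕ) (hn : 0 < n) :
    (∀ k, k ∣ n → Odd k →
      Gcub Fq n k ^ 2 - Gcub Fq n k
          = (X ^ (Fintype.card Fq ^ n) - X) * Fcub Fq n k ^ 3 ∧
        derivative (Gcub Fq n k) ≠ 0 ∧
        (Gcub Fq n k).natDegree = Fintype.card Fq ^ n - Fintype.card Fq ^ (n - k)) ∧
    (∀ k k', k ∣ n → k' ∣ n → Odd k → Odd k' → k ≠ k' →
      (Fcub Fq n k, Gcub Fq n k) ≠ (Fcub Fq n k', Gcub Fq n k')) := by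
  refine ⟨fun k hkn hk => ⟨?_, ?_, ?_⟩, fun k k' hkn hkn' _ _ hne heq => hne ?_⟩
  · exact Gcub_sq_sub_Gcub (pow_mod_three_eq_two_of_odd hq hk) hkn
  · exact derivative_Gcub_ne_zero hn.ne' hkn
  · exact natDegree_Gcub hn.ne' hkn
  · exact injOn_Gcub hn.ne' hkn hkn' (congrArg Prod.snd heq)
end

section
/- Let q be a prime power with q ≡ 3 (mod 4), let k₁, …, k_n be distinct odd positive integers, and let A₀ = Σ_j a_j t^j ∈ 𝔽_q[t] be a polynomial with nonzero constant term such that t^{k_i} − 1 divides A₀ in 𝔽_q[t] for every i = 1, …, n. Let A = Σ_j a_j t^{q^j} be the associated 𝔽_q-additive polynomial. Then there exist n pairwise distinct pairs (F_1,G_1), …, (F_n,G_n) ∈ 𝔽_q[t] × 𝔽_q[t] such that for each i, A·G_i² = F_i³ − F_i and F_i′ ≠ 0; that is, the quadratic twist A(t)·y² = x³ − x has at least n separable ∞-integral points (lying in distinct Frobenius orbits). -/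
open Polynomial

/-! Multiplication by `t ^ k` on `A₀` corresponds to raising `A` to the power `q ^ k`, so each
factorization `A₀ = (t ^ k - 1) * B₀` becomes `A = B ^ (q ^ k) - B`. For odd `k` we have
`q ^ k = 4 * r + 3`, and multiplying by `(B ^ r) ^ 2` turns the right-hand side into
`(B ^ (2 * r + 1)) ^ 3 - B ^ (2 * r + 1)`. The resulting point `(F, G)` satisfies `F = B * G ^ 2`,
so it determines `B`, hence the power `B ^ (q ^ k) = A + B`, hence `k`. It is separable because
`B'` is the nonzero constant `B₀(0)`, while `2 * (2 * r + 1) = q ^ k - 1` is nonzero in `𝔽_q`. -/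

section LinearizedAssociate

variable {R : Type*} [CommSemiring R] (q : ℕ)

/-- The linearized `q`-associate `∑ a_j t ^ (q ^ j)` of a polynomial `∑ a_j t ^ j`, as a linear map.
Over a field with `q` elements it takes values in the additive polynomials. -/
noncomputable def linearizedAssociate : R[X] →ₗ[R] R[X] :=
  lsum fun j => monomial (q ^ j)

theorem linearizedAssociate_monomial (j : ℕ) (a : R) :
    linearizedAssociate q (monomial j a) = monomial (q ^ j) a := by
  simp [linearizedAssociate, lsum_apply, sum_monomial_index]

theorem linearizedAssociate_eq_sum_range (f : R[X]) :
    linearizedAssociate q f = ∑ j ∈ Finset.range (f.natDegree + 1), C (f.coeff j) * X ^ q ^ j := by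
  conv_lhs => rw [f.as_sum_range]
  simp only [map_sum, linearizedAssociate_monomial, C_mul_X_pow_eq_monomial]

theorem linearizedAssociate_X_mul (f : R[X]) :
    linearizedAssociate q (X * f) = expand R q (linearizedAssociate q f) := by
  induction f using Polynomial.induction_on' with
  | add f g hf hg => simp only [mul_add, map_add, hf, hg]
  | monomial j a =>
    rw [X_mul_monomial, linearizedAssociate_monomial, linearizedAssociate_monomial,
      expand_monomial, pow_succ]

variable {q} in
theorem derivative_linearizedAssociate (hq : (q : R) = 0) (f : R[X]) :
    derivative (linearizedAssociate q f) = C (f.coeff 0) := by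
  induction f using Polynomial.induction_on' with
  | add f g hf hg => simp only [map_add, coeff_add, hf, hg]
  | monomial j a =>
    rw [linearizedAssociate_monomial, derivative_monomial]
    cases j <;> simp [coeff_monomial, hq]

end LinearizedAssociate

section LinearizedAssociateCard

variable {K : Type*} [Field K] [Fintype K]

theorem linearizedAssociate_card_X_pow_mul (k : ℕ) (f : K[X]) :
    linearizedAssociate (Fintype.card K) (X ^ k * f) =
      linearizedAssociate (Fintype.card K) f ^ Fintype.card K ^ k := by
  induction k with
  | zero => simp only [pow_zero, one_mul, pow_one]
  | succ k ih =>
    rw [pow_succ', mul_assoc, linearizedAssociate_X_mul, FiniteField.expand_card, ih, ← pow_mul,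
      ← pow_succ]

theorem linearizedAssociate_card_X_pow_sub_one_mul (k : ℕ) (f : K[X]) :
    linearizedAssociate (Fintype.card K) ((X ^ k - 1) * f) =
      linearizedAssociate (Fintype.card K) f ^ Fintype.card K ^ k -
        linearizedAssociate (Fintype.card K) f := by
  rw [sub_mul, one_mul, map_sub, linearizedAssociate_card_X_pow_mul]

end LinearizedAssociateCard

section TwistPoint

/-- The point `(b ^ (2 * r + 1), b ^ r)` of the quadratic twist `(b ^ m - b) * y ^ 2 = x ^ 3 - x`
for `m = 4 * r + 3`, where the first component is the `x`-coordinate. -/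
def twistPoint {M : Type*} [Monoid M] (r : ℕ) (b : M) : M × M :=
  (b ^ (2 * r + 1), b ^ r)

theorem twistPoint_equation {R : Type*} [CommRing R] (r : ℕ) (b : R) :
    (b ^ (4 * r + 3) - b) * (twistPoint r b).2 ^ 2 =
      (twistPoint r b).1 ^ 3 - (twistPoint r b).1 := by
  simp only [twistPoint]
  ring

theorem twistPoint_fst_eq_mul_snd_sq {M : Type*} [Monoid M] (r : ℕ) (b : M) :
    (twistPoint r b).1 = b * (twistPoint r b).2 ^ 2 := by
  rw [twistPoint, ← pow_mul, ← pow_succ', mul_comm r]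

theorem eq_of_twistPoint_eq {M : Type*} [MonoidWithZero M] [IsRightCancelMulZero M]
    {r s : ℕ} {b c : M} (hb : b ≠ 0) (h : twistPoint r b = twistPoint s c) : b = c := by
  have hsnd : (twistPoint r b).2 ^ 2 ≠ 0 := pow_ne_zero 2 (pow_ne_zero r hb)
  apply mul_right_cancel₀ hsnd
  rw [← twistPoint_fst_eq_mul_snd_sq, h, twistPoint_fst_eq_mul_snd_sq]

end TwistPoint

section PolynomialPowers

variable {R : Type*} [CommSemiring R] [NoZeroDivisors R] {f : R[X]}

theorem pow_right_injective_of_natDegree_ne_zero (hf : f.natDegree ≠ 0) :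
    Function.Injective (f ^ · : ℕ → R[X]) := fun m n h => by
  have hdeg : m * f.natDegree = n * f.natDegree := by
    simpa only [natDegree_pow] using congrArg natDegree h
  exact mul_right_cancel₀ hf hdeg

theorem derivative_pow_ne_zero {n : ℕ} (hn : (n : R) ≠ 0) (hf : derivative f ≠ 0) :
    derivative (f ^ n) ≠ 0 := by
  have hf₀ : f ≠ 0 := by
    rintro rfl
    exact hf derivative_zero
  rw [derivative_pow]
  exact mul_ne_zero (mul_ne_zero (C_ne_zero.mpr hn) (pow_ne_zero _ hf₀)) hf

end PolynomialPowers

theorem derivative_twistPoint_fst_ne_zero {R : Type*} [CommRing R] [IsDomain R] {r : ℕ} {f : R[X]}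
    (hr : ((4 * r + 3 : ℕ) : R) = 0) (hf : derivative f ≠ 0) :
    derivative (twistPoint r f).1 ≠ 0 := by
  refine derivative_pow_ne_zero (fun h => one_ne_zero (α := R) ?_) hf
  push_cast at h hr
  linear_combination hr - 2 * h

theorem pow_mod_four_eq_three {a k : ℕ} (ha : a % 4 = 3) (hk : Odd k) : a ^ k % 4 = 3 := by
  obtain ⟨m, rfl⟩ := hk
  have ha' : a ≡ 3 [MOD 4] := ha
  have hsq : a ^ 2 ≡ 1 [MOD 4] := ha'.pow 2
  have hpow : (a ^ 2) ^ m * a ≡ 1 ^ m * 3 [MOD 4] := (hsq.pow m).mul ha'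
  rwa [one_pow, one_mul, ← pow_mul, ← pow_succ] at hpow

theorem stmt2 (Fq : Type*) [Field Fq] [Fintype Fq]
    (hq : Fintype.card Fq % 4 = 3)
    (n : ℕ) (k : Fin n → ℕ) (hodd : ∀ i, Odd (k i)) (hinj : Function.Injective k)
    (A₀ : Polynomial Fq) (hA₀ : A₀.coeff 0 ≠ 0)
    (hdvd : ∀ i, (X ^ (k i) - 1 : Polynomial Fq) ∣ A₀)
    (A : Polynomial Fq)
    (hA : A = ∑ j ∈ Finset.range (A₀.natDegree + 1),
      C (A₀.coeff j) * X ^ (Fintype.card Fq) ^ j) :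
    ∃ P : Fin n → Polynomial Fq × Polynomial Fq, Function.Injective P ∧
      ∀ i, A * (P i).2 ^ 2 = (P i).1 ^ 3 - (P i).1 ∧ derivative (P i).1 ≠ 0 := by
  rw [← linearizedAssociate_eq_sum_range] at hA
  have hcast : (Fintype.card Fq : Fq) = 0 := FiniteField.cast_card_eq_zero Fq
  choose B₀ hB₀ using hdvd
  let B i := linearizedAssociate (Fintype.card Fq) (B₀ i)
  let r i := Fintype.card Fq ^ k i / 4
  have hAB i : B i ^ Fintype.card Fq ^ k i - B i = A := by
    rw [hA, ← linearizedAssociate_card_X_pow_sub_one_mul, ← hB₀ i]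
  have hB' i : derivative (B i) ≠ 0 := by
    rw [hB₀ i, mul_coeff_zero] at hA₀
    simpa only [B, derivative_linearizedAssociate hcast, C_ne_zero] using right_ne_zero_of_mul hA₀
  have hBdeg i : (B i).natDegree ≠ 0 := mt derivative_of_natDegree_zero (hB' i)
  have hr i : 4 * r i + 3 = Fintype.card Fq ^ k i := by
    rw [← pow_mod_four_eq_three hq (hodd i), Nat.div_add_mod]
  refine ⟨fun i => twistPoint (r i) (B i), fun i j hij => hinj ?_, fun i => ⟨?_, ?_⟩⟩
  · have hBij : B i = B j := eq_of_twistPoint_eq (ne_zero_of_natDegree_gt (hBdeg i).bot_lt) hij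
    have hpow : B j ^ Fintype.card Fq ^ k i = B j ^ Fintype.card Fq ^ k j :=
      sub_left_injective ((hBij ▸ hAB i).trans (hAB j).symm)
    exact Nat.pow_right_injective Fintype.one_lt_card
      (pow_right_injective_of_natDegree_ne_zero (hBdeg j) hpow)
  · rw [← hAB i, ← hr i, twistPoint_equation]
  · refine derivative_twistPoint_fst_ne_zero ?_ (hB' i)
    rw [hr i, Nat.cast_pow, hcast, zero_pow (hodd i).pos.ne']
end

section
/- Let q be an odd prime power with q ≡ 2 (mod 3), let n be an odd positive integer, let k be a positive divisor of n, and set r = (q^n + 1)/(q^k + 1) (an integer since n/k is odd). Let a, b, c, d ∈ 𝔽_q satisfy a² + c² = 1, b² + d² = 1, ab + cd = 0. Define X₀ = −(c·t^r + d)^{(q^k+1)/3} and Y₀ = (a·t^r + b)^{(q^k+1)/2} in 𝔽_q[t] (note 3 divides q^k + 1 since q ≡ 2 (mod 3) and k is odd, and 2 divides q^k + 1 since q is odd). Then Y₀² = X₀³ + t^{q^n+1} + 1 in 𝔽_q[t]; that is, (X₀, Y₀) is an ∞-integral point of the cubic twist y² = x³ + t^{q^n+1} + 1 over 𝔽_q(t).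 -/
open Polynomial

/-!
Write `Q = q ^ k` and `T = t ^ r`, so that `T ^ (Q + 1) = t ^ (q ^ n + 1)`. Since the `Q`-power map
is additive and fixes the coefficients, `(a T + b) ^ (Q + 1) = (a T ^ Q + b) (a T + b)`. Hence
`Y₀ ^ 2 - X₀ ^ 3 = (a T + b) ^ (Q + 1) + (c T + d) ^ (Q + 1)` is the dot product of the images of
`(T ^ Q, 1)` and `(T, 1)` under an orthogonal matrix, and equals their own dot product
`T ^ (Q + 1) + 1`.
-/

section Orthogonal

variable {A : Type*} [CommSemiring A] {a b c d : A}

theorem affine_mul_affine_add_of_orthogonal (hac : a ^ 2 + c ^ 2 = 1) (hbd : b ^ 2 + d ^ 2 = 1)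
    (habcd : a * b + c * d = 0) (x y : A) :
    (a * x + b) * (a * y + b) + (c * x + d) * (c * y + d) = x * y + 1 :=
  calc
    _ = (a ^ 2 + c ^ 2) * (x * y) + (a * b + c * d) * (x + y) + (b ^ 2 + d ^ 2) := by ring
    _ = x * y + 1 := by rw [hac, hbd, habcd, one_mul, zero_mul, add_zero]

variable {p e : ℕ} [ExpChar A p]

theorem affine_pow_expChar_pow_add_one (ha : a ^ p ^ e = a) (hb : b ^ p ^ e = b) (x : A) :
    (a * x + b) ^ (p ^ e + 1) = (a * x ^ p ^ e + b) * (a * x + b) := by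
  rw [pow_succ, add_pow_expChar_pow, mul_pow, ha, hb]

theorem affine_pow_add_affine_pow_of_orthogonal
    (ha : a ^ p ^ e = a) (hb : b ^ p ^ e = b) (hc : c ^ p ^ e = c) (hd : d ^ p ^ e = d)
    (hac : a ^ 2 + c ^ 2 = 1) (hbd : b ^ 2 + d ^ 2 = 1) (habcd : a * b + c * d = 0) (x : A) :
    (a * x + b) ^ (p ^ e + 1) + (c * x + d) ^ (p ^ e + 1) = x ^ (p ^ e + 1) + 1 := by
  rw [affine_pow_expChar_pow_add_one ha hb, affine_pow_expChar_pow_add_one hc hd,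
    affine_mul_affine_add_of_orthogonal hac hbd habcd, ← pow_succ]

end Orthogonal

theorem pow_add_one_dvd_pow_add_one {k n : ℕ} (q : ℕ) (hkn : k ∣ n) (hn : Odd n) :
    q ^ k + 1 ∣ q ^ n + 1 := by
  obtain ⟨m, rfl⟩ := hkn
  simpa only [pow_mul, one_pow] using (Nat.odd_mul.mp hn).2.nat_add_dvd_pow_add_pow (q ^ k) 1

theorem three_dvd_pow_add_one {q k : ℕ} (hq : q % 3 = 2) (hk : Odd k) : 3 ∣ q ^ k + 1 := by
  have three_dvd_add_one : 3 ∣ q ^ 1 + 1 := by rw [pow_one]; omega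
  exact three_dvd_add_one.trans (pow_add_one_dvd_pow_add_one q (one_dvd k) hk)

theorem stmt11_general {R : Type*} [CommRing R] {p e q : ℕ} [ExpChar R p] (hq : q = p ^ e)
    (hqodd : Odd q) (hq3 : q % 3 = 2) {n k : ℕ} (hnodd : Odd n) (hkn : k ∣ n)
    {r : ℕ} (hr : r = (q ^ n + 1) / (q ^ k + 1)) {a b c d : R}
    (ha : a ^ q ^ k = a) (hb : b ^ q ^ k = b) (hc : c ^ q ^ k = c) (hd : d ^ q ^ k = d)
    (hac : a ^ 2 + c ^ 2 = 1) (hbd : b ^ 2 + d ^ 2 = 1) (habcd : a * b + c * d = 0)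
    {X₀ Y₀ : R[X]} (hX₀ : X₀ = -(C c * X ^ r + C d) ^ ((q ^ k + 1) / 3))
    (hY₀ : Y₀ = (C a * X ^ r + C b) ^ ((q ^ k + 1) / 2)) :
    Y₀ ^ 2 = X₀ ^ 3 + X ^ (q ^ n + 1) + 1 := by
  have hY : Y₀ ^ 2 = (C a * X ^ r + C b) ^ (q ^ k + 1) := by
    rw [hY₀, ← pow_mul, Nat.div_mul_cancel hqodd.pow.add_one.two_dvd]
  have hX : X₀ ^ 3 = -(C c * X ^ r + C d) ^ (q ^ k + 1) := by
    rw [hX₀, Odd.neg_pow (by decide), ← pow_mul,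
      Nat.div_mul_cancel (three_dvd_pow_add_one hq3 (hnodd.of_dvd_nat hkn))]
  have hT : (X : R[X]) ^ (q ^ n + 1) = (X ^ r) ^ (q ^ k + 1) := by
    rw [hr, ← pow_mul, Nat.div_mul_cancel (pow_add_one_dvd_pow_add_one q hkn hnodd)]
  have hsum : (C a * X ^ r + C b) ^ (q ^ k + 1) + (C c * X ^ r + C d) ^ (q ^ k + 1) =
      (X ^ r) ^ (q ^ k + 1) + 1 := by
    rw [hq, ← pow_mul] at ha hb hc hd ⊢
    apply affine_pow_add_affine_pow_of_orthogonal <;>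
      simp only [← C_pow, ← C_mul, ← C_add, ha, hb, hc, hd, hac, hbd, habcd, C_1, C_0]
  rw [hY, hX, hT]
  linear_combination hsum

theorem stmt11 (Fq : Type*) [Field Fq] [Fintype Fq]
    (hqodd : Odd (Fintype.card Fq)) (hq3 : Fintype.card Fq % 3 = 2)
    (n k : ℕ) (hnodd : Odd n) (hn : 0 < n) (hk : 0 < k) (hkn : k ∣ n)
    (r : ℕ) (hr : r = (Fintype.card Fq ^ n + 1) / (Fintype.card Fq ^ k + 1))
    (a b c d : Fq)
    (h1 : a ^ 2 + c ^ 2 = 1) (h2 : b ^ 2 + d ^ 2 = 1) (h3 : a * b + c * d = 0)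
    (X₀ Y₀ : Polynomial Fq)
    (hX₀ : X₀ = -(C c * X ^ r + C d) ^ ((Fintype.card Fq ^ k + 1) / 3))
    (hY₀ : Y₀ = (C a * X ^ r + C b) ^ ((Fintype.card Fq ^ k + 1) / 2)) :
    Y₀ ^ 2 = X₀ ^ 3 + X ^ (Fintype.card Fq ^ n + 1) + 1 := by
  obtain ⟨p, _, e, hp, hcard⟩ := FiniteField.card' Fq
  have : ExpChar Fq p := .prime hp
  have hfix (u : Fq) := FiniteField.pow_card_pow k u
  exact stmt11_general hcard hqodd hq3 hnodd hkn hr (hfix a) (hfix b) (hfix c) (hfix d)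
    h1 h2 h3 hX₀ hY₀
end
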